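/- Step (a) in the proof of Theorem 3.5: If A ∈ End_K(V̄^⊗m) commutes with Ξ(h) for every h ∈ 𝓗_m, then A stabilizes every subspace V̄_{I,J} (for all I ⊆ {1,…,m} and J ⊆ {1,…,m} ∖ I); in particular A stabilizes V^⊗l ⊗ η_{r+3/2}^⊗(m−l) and each V̄_l for 0 ≤ l ≤ m. -/

import Mathlib

/-!
Sort the basis indices of `V̄` into three classes: `bottom < inner < top`, encoded as `-1, 0, 1`.
The *pattern* of a basis vector `M_f` records the class of each tensor position, and the spaces
`V̄_{I,J}` are exactly the spans `patSpace r π` of all `M_f` with a given pattern `π`.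

If `π` has different classes at two neighbouring positions, then on `patSpace r π` the operator
`Ψ(H_i)` (when the classes increase) or `Ψ(H_i)⁻¹ = Ψ(H_i) + q - q⁻¹` (when they decrease) merely
permutes basis vectors, because the comparison of `f(i)` and `f(i+1)` is decided by the pattern
alone.  The same holds for `H_0` when the first class is nonzero.  Hence an `A` commuting with all
`Ψ(H_i)` that stabilizes `patSpace r π` also stabilizes `patSpace r π'` for every `π'` in the orbit
of `π` under the hyperoctahedral group (`Stab.of_perm`, `Stab.flip`).

Every orbit contains a pattern `(0,…,0,1,…,1)`, whose space is `V^{⊗l} ⊗ η_{r+3/2}^{⊗(m-l)}`.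
This space is the image of the projection `Ξ(x_e^{(l)})`, with which `A` commutes, so `A` stabilizes
it (`stab_std`), and therefore stabilizes all `patSpace r π` (`stab_all`).
-/


noncomputable section

open scoped BigOperators

set_option maxHeartbeats 1000000
set_option synthInstance.maxHeartbeats 400000

/-- The field `ℚ(q)`. -/
abbrev Kq : Type := RatFunc ℚ

/-- The element `q`, transcendental over `ℚ`. -/
def qv : Kq := RatFunc.X

/-- Index set `𝕀(2r+4)`: the `j`-th element represents the half-integer `j - r - 3/2`. -/
abbrev Idx (r : ℕ) := Fin (2*r+4)

/-- The space `V̄`, with basis `η_j` indexed by `𝕀(2r+4)` (coordinate form). -/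
abbrev Vb (r : ℕ) := Idx r → Kq

/-- The tensor power `V̄^⊗m` (coordinates with respect to the basis `M_f`). -/
abbrev TP (r m : ℕ) := (Fin m → Idx r) → Kq

/-- Basis vector `M_f = η_{f 0} ⊗ ⋯ ⊗ η_{f (m-1)}`. -/
def Mf {r m : ℕ} (f : Fin m → Idx r) : TP r m := Pi.single f 1

/-- For a quantum-group index `a : Fin (2r+3)` (representing `i = a - r - 1 ∈ [-r-1, r+1]`),
the index of `η_{i - 1/2}`. -/
def loI {r : ℕ} (a : Fin (2*r+3)) : Idx r := ⟨a.1, by have := a.2; omega⟩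

/-- The index of `η_{i + 1/2}`. -/
def hiI {r : ℕ} (a : Fin (2*r+3)) : Idx r := ⟨a.1+1, by have := a.2; omega⟩

/-- The index of `η_{-r-3/2}`. -/
def botI (r : ℕ) : Idx r := ⟨0, by omega⟩

/-- The index of `η_{r+3/2}`. -/
def topI (r : ℕ) : Idx r := ⟨2*r+3, by omega⟩

/-- A linear endomorphism of `V̄` of the shape `v ↦ (j ↦ c j * v (t j))`. -/
def diagMove (r : ℕ) (c : Idx r → Kq) (t : Idx r → Idx r) : Module.End Kq (Vb r) where
  toFun v := fun j => c j * v (t j)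
  map_add' u v := by funext j; simp [Pi.add_apply, mul_add]
  map_smul' s v := by
    funext j
    simp only [Pi.smul_apply, smul_eq_mul, RingHom.id_apply]
    ring

/-- The operator `e_i` on `V̄`: `e_i η_{i+1/2} = η_{i-1/2}`, zero on other basis vectors. -/
def opE (r : ℕ) (a : Fin (2*r+3)) : Module.End Kq (Vb r) :=
  diagMove r (fun j => if j = loI a then 1 else 0) (fun j => if j = loI a then hiI a else j)

/-- The operator `f_i` on `V̄`: `f_i η_{i-1/2} = η_{i+1/2}`, zero on other basis vectors. -/
def opF (r : ℕ) (a : Fin (2*r+3)) : Module.End Kq (Vb r) :=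
  diagMove r (fun j => if j = hiI a then 1 else 0) (fun j => if j = hiI a then loI a else j)

/-- The operator `κ_i` on `V̄`. -/
def opK (r : ℕ) (a : Fin (2*r+3)) : Module.End Kq (Vb r) :=
  diagMove r (fun j => if j = loI a then qv else if j = hiI a then qv⁻¹ else 1) id

/-- The operator `κ_i⁻¹` on `V̄`. -/
def opKinv (r : ℕ) (a : Fin (2*r+3)) : Module.End Kq (Vb r) :=
  diagMove r (fun j => if j = loI a then qv⁻¹ else if j = hiI a then qv else 1) id

/-- A linear endomorphism of `V̄^⊗m` given by a "matrix" `c`. -/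
def matOp (r m : ℕ) (c : (Fin m → Idx r) → (Fin m → Idx r) → Kq) : Module.End Kq (TP r m) where
  toFun v := fun g => ∑ f : Fin m → Idx r, c g f * v f
  map_add' u v := by
    funext g
    simp [Pi.add_apply, mul_add, Finset.sum_add_distrib]
  map_smul' s v := by
    funext g
    simp only [Pi.smul_apply, smul_eq_mul, RingHom.id_apply, Finset.mul_sum]
    exact Finset.sum_congr rfl (fun f _ => by ring)

/-- The tensor product `A 0 ⊗ A 1 ⊗ ⋯ ⊗ A (m-1)` of endomorphisms of `V̄`,
as an endomorphism of `V̄^⊗m`. -/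
def tensorOp (r m : ℕ) (A : Fin m → Module.End Kq (Vb r)) : Module.End Kq (TP r m) :=
  matOp r m (fun g f => ∏ k : Fin m, (A k) (Pi.single (f k) 1) (g k))
/-- `𝔼_i = Σ_j id^{⊗(j-1)} ⊗ e_i ⊗ (κ_i⁻¹)^{⊗(m-j)}` on `V̄^⊗m`. -/
def opEE (r m : ℕ) (a : Fin (2*r+3)) : Module.End Kq (TP r m) :=
  ∑ j : Fin m, tensorOp r m (fun k =>
    if (k : ℕ) < (j : ℕ) then 1 else if k = j then opE r a else opKinv r a)

/-- `𝔽_i = Σ_j κ_i^{⊗(j-1)} ⊗ f_i ⊗ id^{⊗(m-j)}` on `V̄^⊗m`. -/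
def opFF (r m : ℕ) (a : Fin (2*r+3)) : Module.End Kq (TP r m) :=
  ∑ j : Fin m, tensorOp r m (fun k =>
    if (k : ℕ) < (j : ℕ) then opK r a else if k = j then opF r a else 1)

/-- `𝕂_i = κ_i^{⊗m}`. -/
def opKK (r m : ℕ) (a : Fin (2*r+3)) : Module.End Kq (TP r m) :=
  tensorOp r m (fun _ => opK r a)

/-- `𝕂_i⁻¹ = (κ_i⁻¹)^{⊗m}`. -/
def opKKinv (r m : ℕ) (a : Fin (2*r+3)) : Module.End Kq (TP r m) :=
  tensorOp r m (fun _ => opKinv r a)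

/-- `𝕜_i = 𝕂_i 𝕂_{-i}⁻¹` (the index `-i` corresponds to `Fin.rev a`). -/
def opkk (r m : ℕ) (a : Fin (2*r+3)) : Module.End Kq (TP r m) :=
  opKK r m a * opKKinv r m a.rev

/-- `𝕜_i⁻¹ = 𝕂_{-i} 𝕂_i⁻¹`. -/
def opkkInv (r m : ℕ) (a : Fin (2*r+3)) : Module.End Kq (TP r m) :=
  opKK r m a.rev * opKKinv r m a

/-- The index `a` corresponding to `i = 0`. -/
def midI (r : ℕ) : Fin (2*r+3) := ⟨r+1, by omega⟩

/-- `ℬ_i = 𝔼_i + 𝔽_{-i} 𝕂_i⁻¹` for `i ≠ 0`. -/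
def opB (r m : ℕ) (a : Fin (2*r+3)) : Module.End Kq (TP r m) :=
  opEE r m a + opFF r m a.rev * opKKinv r m a

/-- `ℬ_0 = 𝔼_0 + q 𝔽_0 𝕂_0⁻¹ + 𝕂_0⁻¹`. -/
def opB0 (r m : ℕ) : Module.End Kq (TP r m) :=
  opEE r m (midI r) + qv • (opFF r m (midI r) * opKKinv r m (midI r)) + opKKinv r m (midI r)

/-- Generating set of the Levi-type ıquantum group image `Φ(L_q^ı)`:
`ℬ_0`, the `ℬ_i` with `0 ≠ i`, `-r ≤ i ≤ r`, and the `𝕜_i^{±1}` with `-r-1 ≤ i ≤ r+1`. -/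
def LeviSet (r m : ℕ) : Set (Module.End Kq (TP r m)) :=
  {opB0 r m} ∪ (opB r m '' {a | a ≠ midI r ∧ 0 < (a : ℕ) ∧ (a : ℕ) < 2*r+2}) ∪
    Set.range (opkk r m) ∪ Set.range (opkkInv r m)

/-- `Φ(L_q^ı)`, the image of the Levi-type ıquantum group in `End(V̄^⊗m)`. -/
def PhiL (r m : ℕ) : Subalgebra Kq (Module.End Kq (TP r m)) :=
  Algebra.adjoin Kq (LeviSet r m)

/-- The operator `Ψ(H_0)` on `V̄^⊗m`. -/
def R0op (r m : ℕ) : Module.End Kq (TP r m) :=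
  if h : 0 < m then
    { toFun := fun v g =>
        v (Function.update g ⟨0, h⟩ (Fin.rev (g ⟨0, h⟩))) +
          (if g ⟨0, h⟩ < Fin.rev (g ⟨0, h⟩) then (qv⁻¹ - qv) * v g else 0)
      map_add' := fun u v => by
        funext g
        simp only [Pi.add_apply]
        split_ifs <;> ring
      map_smul' := fun s v => by
        funext g
        simp only [Pi.smul_apply, smul_eq_mul, RingHom.id_apply]
        split_ifs <;> ring }
  else 1

/-- The operator `Ψ(H_{p+1})` on `V̄^⊗m`, interchanging tensor positions `p` and `p+1`
(0-based). -/
def Rsw (r m : ℕ) (p : ℕ) : Module.End Kq (TP r m) :=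
  if h : p + 1 < m then
    { toFun := fun v g =>
        if g ⟨p, by omega⟩ = g ⟨p+1, h⟩ then qv⁻¹ * v g
        else v (g ∘ Equiv.swap ⟨p, by omega⟩ ⟨p+1, h⟩) +
          (if g ⟨p+1, h⟩ < g ⟨p, by omega⟩ then (qv⁻¹ - qv) * v g else 0)
      map_add' := fun u v => by
        funext g
        simp only [Pi.add_apply, Function.comp_apply]
        split_ifs <;> ring
      map_smul' := fun s v => by
        funext g
        simp only [Pi.smul_apply, smul_eq_mul, RingHom.id_apply, Function.comp_apply]
        split_ifs <;> ring }
  else 1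

/-- The operator `Ψ(H_i)` on `V̄^⊗m`, for `0 ≤ i ≤ m-1`. -/
def RopN (r m : ℕ) (i : ℕ) : Module.End Kq (TP r m) :=
  if i = 0 then R0op r m else Rsw r m (i - 1)
/-- `j ∈ 𝕀(2r+2)`, i.e. `η_j ∈ V`. -/
def innerI (r : ℕ) (j : Idx r) : Prop := j ≠ botI r ∧ j ≠ topI r

/-- `f` indexes a basis vector of `V^{⊗l} ⊗ η_{r+3/2}^{⊗(m-l)}`. -/
def goodF (r m : ℕ) (l : ℕ) (f : Fin m → Idx r) : Prop :=
  ∀ k : Fin m, ((k : ℕ) < l → innerI r (f k)) ∧ (l ≤ (k : ℕ) → f k = topI r)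

/-- The subspace `V̄_{{1,…,l},∅} = V^{⊗l} ⊗ η_{r+3/2}^{⊗(m-l)}` of `V̄^⊗m`. -/
def Vsub (r m : ℕ) (l : ℕ) : Submodule Kq (TP r m) :=
  Submodule.span Kq {v | ∃ f, goodF r m l f ∧ v = Mf f}

/-- The subspace `V̄_{I,J}` of `V̄^⊗m`. -/
def VIJ (r m : ℕ) (I J : Finset (Fin m)) : Submodule Kq (TP r m) :=
  Submodule.span Kq {v | ∃ f : Fin m → Idx r,
    (∀ k : Fin m, (k ∈ I → innerI r (f k)) ∧ (k ∈ J → f k = botI r) ∧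
      (k ∉ I → k ∉ J → f k = topI r)) ∧ v = Mf f}

/-- The subspace `V̄_l = ⊕_{#I = l, J} V̄_{I,J}` of `V̄^⊗m`. -/
def Vlevel (r m : ℕ) (l : ℕ) : Submodule Kq (TP r m) :=
  Submodule.span Kq {v | ∃ f : Fin m → Idx r,
    Nat.card {k : Fin m // innerI r (f k)} = l ∧ v = Mf f}

/-- The length (number of inversions) of a permutation of `{0, …, l-1}`. -/
def lenPerm {l : ℕ} (σ : Equiv.Perm (Fin l)) : ℕ :=
  (Finset.univ.filter (fun p : Fin l × Fin l => p.1 < p.2 ∧ σ p.2 < σ p.1)).card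

/-- The simple transposition interchanging `p` and `p+1` (0-based) in `𝔖_l`;
this is the paper's `s_{p+1}`. -/
def adjSwap (l : ℕ) (p : ℕ) : Equiv.Perm (Fin l) :=
  if h : p + 1 < l then Equiv.swap ⟨p, by omega⟩ ⟨p+1, h⟩ else 1

/-- The first descent of a permutation, if any. -/
def descentIdx {l : ℕ} (σ : Equiv.Perm (Fin l)) : Option ℕ :=
  (List.range l).find? (fun p =>
    if h : p + 1 < l then decide (σ ⟨p+1, h⟩ < σ ⟨p, by omega⟩) else false)

/-- Canonical reduced word construction (with fuel). -/
def permWordAux {l : ℕ} : ℕ → Equiv.Perm (Fin l) → List ℕ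
  | 0, _ => []
  | (fuel+1), σ =>
    match descentIdx σ with
    | none => []
    | some p => permWordAux fuel (σ * adjSwap l p) ++ [p]

/-- A canonical reduced word for `σ`: `σ = s_{p₁+1} ⋯ s_{p_k+1}` (paper indexing)
where `permWord σ = [p₁, …, p_k]`, and `k = ℓ(σ)`. -/
def permWord {l : ℕ} (σ : Equiv.Perm (Fin l)) : List ℕ := permWordAux (lenPerm σ) σ

/-- The operator `Ψ(H_σ)` on `V̄^⊗m` for a permutation `σ ∈ 𝔖_l` (`l ≤ m`), where
`H_σ = H_{i₁} ⋯ H_{i_k}` for a reduced expression `σ = s_{i₁} ⋯ s_{i_k}`; since `Ψ` is an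
anti-homomorphism this is the product of the `Ψ(H_i)` in reversed order. -/
def opPerm (r m : ℕ) {l : ℕ} (σ : Equiv.Perm (Fin l)) : Module.End Kq (TP r m) :=
  (((permWord σ).map (fun p => RopN r m (p+1))).reverse).prod

/-- `A` is a finite product of the operators `Ψ(H_i)^{±1}`, `0 ≤ i ≤ m-1`. -/
def IsRWord (r m : ℕ) (A : Module.End Kq (TP r m)) : Prop :=
  ∃ ws : List (Module.End Kq (TP r m)), A = ws.prod ∧
    ∀ u ∈ ws, ∃ i : ℕ, i < m ∧
      (u = RopN r m i ∨ (u * RopN r m i = 1 ∧ RopN r m i * u = 1))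
/-- Generator `H_i` of the free algebra on `m` letters. -/
def Hvar (m : ℕ) (i : Fin m) : FreeAlgebra Kq (Fin m) := FreeAlgebra.ι Kq i

/-- The defining relations of the Iwahori–Hecke algebra `H(B_m)` of type `B_m`. -/
inductive HBrel (m : ℕ) : FreeAlgebra Kq (Fin m) → FreeAlgebra Kq (Fin m) → Prop
  | quad (i : Fin m) :
      HBrel m ((Hvar m i - algebraMap Kq _ qv⁻¹) * (Hvar m i + algebraMap Kq _ qv)) 0
  | braid (i : ℕ) (h1 : 1 ≤ i) (h2 : i + 1 < m) :
      HBrel m (Hvar m ⟨i, by omega⟩ * Hvar m ⟨i+1, h2⟩ * Hvar m ⟨i, by omega⟩)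
              (Hvar m ⟨i+1, h2⟩ * Hvar m ⟨i, by omega⟩ * Hvar m ⟨i+1, h2⟩)
  | comm (i j : Fin m) (h : (i : ℕ) + 1 < (j : ℕ) ∨ (j : ℕ) + 1 < (i : ℕ)) :
      HBrel m (Hvar m i * Hvar m j) (Hvar m j * Hvar m i)
  | braid0 (h : 1 < m) :
      HBrel m (Hvar m ⟨0, by omega⟩ * Hvar m ⟨1, h⟩ * Hvar m ⟨0, by omega⟩ * Hvar m ⟨1, h⟩)
              (Hvar m ⟨1, h⟩ * Hvar m ⟨0, by omega⟩ * Hvar m ⟨1, h⟩ * Hvar m ⟨0, by omega⟩)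

/-- The Iwahori–Hecke algebra `H(B_m)` of type `B_m` over `ℚ(q)`. -/
abbrev HeckeB (m : ℕ) := RingQuot (HBrel m)

/-- The generator `H_i ∈ H(B_m)`. -/
def Hgen (m : ℕ) (i : Fin m) : HeckeB m := RingQuot.mkAlgHom Kq (HBrel m) (Hvar m i)

/-- The generator `H_j ∈ H(B_m)` with out-of-range indices sent to `1`. -/
def HgenN (m : ℕ) (j : ℕ) : HeckeB m := if h : j < m then Hgen m ⟨j, h⟩ else 1

/-- The element `H_w ∈ H(B_m)` for `w ∈ 𝔖_m ⊂ 𝒲(B_m)`, defined via a reduced expression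
for `w` (well defined by Matsumoto's theorem). -/
def HpermB (m : ℕ) (w : Equiv.Perm (Fin m)) : HeckeB m :=
  ((permWord w).map (fun p => HgenN m (p+1))).prod

/-- Generators of the duplex Hecke algebra: the `T_i` and the `x_σ^{(l)}`. -/
def DGen (m : ℕ) : Type := (Fin m) ⊕ (Σ l : Fin (m+1), Equiv.Perm (Fin (l : ℕ)))

/-- The generator `T_i` of the free algebra. -/
def Tvar (m : ℕ) (i : Fin m) : FreeAlgebra Kq (DGen m) := FreeAlgebra.ι Kq (Sum.inl i)

/-- The generator `x_σ^{(l)}` of the free algebra. -/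
def Xvar (m : ℕ) (l : Fin (m+1)) (σ : Equiv.Perm (Fin (l : ℕ))) : FreeAlgebra Kq (DGen m) :=
  FreeAlgebra.ι Kq (Sum.inr ⟨l, σ⟩)

/-- The defining relations of the duplex Hecke algebra `𝓗_m` of type `B`. -/
inductive DHrel (m : ℕ) : FreeAlgebra Kq (DGen m) → FreeAlgebra Kq (DGen m) → Prop
  | quadT (i : Fin m) :
      DHrel m ((Tvar m i + algebraMap Kq _ qv) * (Tvar m i - algebraMap Kq _ qv⁻¹)) 0
  | braidT (i : ℕ) (h1 : 1 ≤ i) (h2 : i + 1 < m) :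
      DHrel m (Tvar m ⟨i, by omega⟩ * Tvar m ⟨i+1, h2⟩ * Tvar m ⟨i, by omega⟩)
              (Tvar m ⟨i+1, h2⟩ * Tvar m ⟨i, by omega⟩ * Tvar m ⟨i+1, h2⟩)
  | commT (i j : Fin m) (h : (i : ℕ) + 1 < (j : ℕ) ∨ (j : ℕ) + 1 < (i : ℕ)) :
      DHrel m (Tvar m i * Tvar m j) (Tvar m j * Tvar m i)
  | braid0T (h : 1 < m) :
      DHrel m (Tvar m ⟨0, by omega⟩ * Tvar m ⟨1, h⟩ * Tvar m ⟨0, by omega⟩ * Tvar m ⟨1, h⟩)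
              (Tvar m ⟨1, h⟩ * Tvar m ⟨0, by omega⟩ * Tvar m ⟨1, h⟩ * Tvar m ⟨0, by omega⟩)
  | xRightUp (l : Fin (m+1)) (σ : Equiv.Perm (Fin (l : ℕ))) (p : ℕ) (hp : p + 1 < (l : ℕ))
      (hlen : lenPerm (σ * adjSwap (l : ℕ) p) = lenPerm σ + 1) :
      DHrel m (Xvar m l σ * Xvar m l (adjSwap (l : ℕ) p)) (Xvar m l (σ * adjSwap (l : ℕ) p))
  | xRightDown (l : Fin (m+1)) (σ : Equiv.Perm (Fin (l : ℕ))) (p : ℕ) (hp : p + 1 < (l : ℕ))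
      (hlen : lenPerm (σ * adjSwap (l : ℕ) p) + 1 = lenPerm σ) :
      DHrel m (Xvar m l σ * Xvar m l (adjSwap (l : ℕ) p))
              (Xvar m l (σ * adjSwap (l : ℕ) p) + algebraMap Kq _ (qv⁻¹ - qv) * Xvar m l σ)
  | xLeftUp (l : Fin (m+1)) (σ : Equiv.Perm (Fin (l : ℕ))) (p : ℕ) (hp : p + 1 < (l : ℕ))
      (hlen : lenPerm (adjSwap (l : ℕ) p * σ) = lenPerm σ + 1) :
      DHrel m (Xvar m l (adjSwap (l : ℕ) p) * Xvar m l σ) (Xvar m l (adjSwap (l : ℕ) p * σ))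
  | xLeftDown (l : Fin (m+1)) (σ : Equiv.Perm (Fin (l : ℕ))) (p : ℕ) (hp : p + 1 < (l : ℕ))
      (hlen : lenPerm (adjSwap (l : ℕ) p * σ) + 1 = lenPerm σ) :
      DHrel m (Xvar m l (adjSwap (l : ℕ) p) * Xvar m l σ)
              (Xvar m l (adjSwap (l : ℕ) p * σ) + algebraMap Kq _ (qv⁻¹ - qv) * Xvar m l σ)
  | xOrtho (l k : Fin (m+1)) (h : l ≠ k) (σ : Equiv.Perm (Fin (l : ℕ)))
      (γ : Equiv.Perm (Fin (k : ℕ))) :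
      DHrel m (Xvar m l σ * Xvar m k γ) 0
  | TxMid (i : ℕ) (l : Fin (m+1)) (h0 : 0 < i) (hil : i < (l : ℕ))
      (σ : Equiv.Perm (Fin (l : ℕ))) :
      DHrel m (Tvar m ⟨i, by have := l.2; omega⟩ * Xvar m l σ)
              (Xvar m l (adjSwap (l : ℕ) (i-1)) * Xvar m l σ)
  | xTMid (i : ℕ) (l : Fin (m+1)) (h0 : 0 < i) (hil : i < (l : ℕ))
      (σ : Equiv.Perm (Fin (l : ℕ))) :
      DHrel m (Xvar m l σ * Tvar m ⟨i, by have := l.2; omega⟩)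
              (Xvar m l σ * Xvar m l (adjSwap (l : ℕ) (i-1)))
  | TxBig (i : Fin m) (l : Fin (m+1)) (h : (l : ℕ) < (i : ℕ)) (σ : Equiv.Perm (Fin (l : ℕ))) :
      DHrel m (Tvar m i * Xvar m l σ) (algebraMap Kq _ qv⁻¹ * Xvar m l σ)
  | xTBig (i : Fin m) (l : Fin (m+1)) (h : (l : ℕ) < (i : ℕ)) (σ : Equiv.Perm (Fin (l : ℕ))) :
      DHrel m (Xvar m l σ * Tvar m i) (algebraMap Kq _ qv⁻¹ * Xvar m l σ)

/-- The duplex Hecke algebra `𝓗_m` of type `B` over `ℚ(q)`. -/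
abbrev DuplexH (m : ℕ) := RingQuot (DHrel m)

/-- The generator `T_i ∈ 𝓗_m`. -/
def Tg (m : ℕ) (i : Fin m) : DuplexH m := RingQuot.mkAlgHom Kq (DHrel m) (Tvar m i)

/-- The generator `x_σ^{(l)} ∈ 𝓗_m`. -/
def Xg (m : ℕ) (l : Fin (m+1)) (σ : Equiv.Perm (Fin (l : ℕ))) : DuplexH m :=
  RingQuot.mkAlgHom Kq (DHrel m) (Xvar m l σ)

/-! ### Patterns -/

/-- The class of a basis index: `-1` for `-r-3/2`, `1` for `r+3/2`, and `0` for `𝕀(2r+2)`. -/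
def pat (r : ℕ) (j : Idx r) : ℤ := if j = botI r then -1 else if j = topI r then 1 else 0

lemma pat_eq_zero_iff {r : ℕ} (j : Idx r) : pat r j = 0 ↔ innerI r j := by
  unfold pat innerI
  split_ifs <;> simp_all

lemma botI_ne_topI (r : ℕ) : botI r ≠ topI r := by
  simp [botI, topI, Fin.ext_iff]

lemma pat_eq_one_iff {r : ℕ} (j : Idx r) : pat r j = 1 ↔ j = topI r := by
  have := botI_ne_topI r
  unfold pat
  split_ifs <;> simp_all

lemma pat_eq_neg_one_iff {r : ℕ} (j : Idx r) : pat r j = -1 ↔ j = botI r := by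
  unfold pat
  split_ifs <;> simp_all

lemma lt_of_pat_lt {r : ℕ} {i j : Idx r} (h : pat r i < pat r j) : i < j := by
  unfold pat botI topI at h
  simp only [Fin.ext_iff] at h
  rw [Fin.lt_def]
  have := i.2
  have := j.2
  split_ifs at h <;> omega

lemma pat_rev {r : ℕ} (j : Idx r) : pat r j.rev = - pat r j := by
  unfold pat botI topI
  simp only [Fin.ext_iff, Fin.val_rev]
  have := j.2
  split_ifs <;> omega

/-- The span of all `M_f` with pattern `π`, described by vanishing of the other coordinates. -/
def patSpace (r : ℕ) {m : ℕ} (π : Fin m → ℤ) : Submodule Kq (TP r m) where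
  carrier := {v | ∀ g : Fin m → Idx r, (pat r ∘ g) ≠ π → v g = 0}
  add_mem' := fun {u v} hu hv g hg => by simp [hu g hg, hv g hg]
  zero_mem' := fun g _ => rfl
  smul_mem' := fun c v hv g hg => by simp [hv g hg]

lemma mem_patSpace {r m : ℕ} {π : Fin m → ℤ} {v : TP r m} :
    v ∈ patSpace r π ↔ ∀ g : Fin m → Idx r, (pat r ∘ g) ≠ π → v g = 0 := Iff.rfl

lemma eq_sum_Mf {r m : ℕ} (v : TP r m) : v = ∑ f, v f • Mf f := by
  funext g
  simp [Mf, Finset.sum_apply, Pi.single_apply]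

lemma mem_span_Mf {r m : ℕ} (P : (Fin m → Idx r) → Prop) (v : TP r m) :
    v ∈ Submodule.span Kq {v | ∃ f, P f ∧ v = Mf f} ↔ ∀ g, ¬ P g → v g = 0 := by
  constructor
  · intro hv g hg
    induction hv using Submodule.span_induction with
    | mem x hx =>
      obtain ⟨f, hf, rfl⟩ := hx
      have : g ≠ f := by rintro rfl; exact hg hf
      simp [Mf, this]
    | zero => rfl
    | add x y _ _ hx hy => simp [hx, hy]
    | smul c x _ hx => simp [hx]
  · intro h
    rw [eq_sum_Mf v]
    refine Submodule.sum_mem _ fun f _ => ?_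
    by_cases hf : P f
    · exact Submodule.smul_mem _ _ (Submodule.subset_span ⟨f, hf, rfl⟩)
    · rw [h f hf, zero_smul]
      exact Submodule.zero_mem _

/-- The pattern `(0,…,0,1,…,1)` with `l` zeros. -/
def stdPat (m l : ℕ) : Fin m → ℤ := fun k => if (k : ℕ) < l then 0 else 1

lemma goodF_iff {r m l : ℕ} (f : Fin m → Idx r) : goodF r m l f ↔ pat r ∘ f = stdPat m l := by
  rw [funext_iff]
  refine forall_congr' fun k => ?_
  rw [Function.comp_apply, stdPat]
  split_ifs with h
  · rw [pat_eq_zero_iff]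
    exact ⟨fun H => H.1 h, fun H => ⟨fun _ => H, fun h' => by omega⟩⟩
  · rw [pat_eq_one_iff]
    exact ⟨fun H => H.2 (by omega), fun H => ⟨fun h' => by omega, fun _ => H⟩⟩

lemma Vsub_eq (r m l : ℕ) : Vsub r m l = patSpace r (stdPat m l) := by
  ext v
  rw [Vsub, mem_span_Mf, mem_patSpace]
  simp only [goodF_iff, ne_eq]

/-- Disjointness makes the conditions for `k ∈ I` and for `k ∈ J` exclusive, so that they
amount to a single pattern. -/
lemma VIJ_eq (r m : ℕ) (I J : Finset (Fin m)) (hIJ : Disjoint I J) :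
    VIJ r m I J = patSpace r (fun k => if k ∈ I then 0 else if k ∈ J then -1 else 1) := by
  ext v
  rw [VIJ, mem_span_Mf, mem_patSpace]
  refine forall_congr' fun g => ?_
  rw [ne_eq, funext_iff]
  refine imp_congr (not_congr (forall_congr' fun k => ?_)) Iff.rfl
  have hd : k ∈ I → k ∉ J := fun h => Finset.disjoint_left.mp hIJ h
  rw [Function.comp_apply]
  split_ifs with h1 h2
  · have := hd h1
    rw [pat_eq_zero_iff]
    tauto
  · rw [pat_eq_neg_one_iff]
    tauto
  · rw [pat_eq_one_iff]
    tauto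

/-! ### Moving between patterns -/

/-- `A` stabilizes the span of the basis vectors with pattern `π`. -/
def Stab {r m : ℕ} (A : Module.End Kq (TP r m)) (π : Fin m → ℤ) : Prop :=
  ∀ v ∈ patSpace r π, A v ∈ patSpace r π

/-- Stability is transported along an operator `B` that commutes with `A` and acts on
`patSpace r π` as an involution `φ` of the index set. -/
lemma Stab.transport {r m : ℕ} {A B : Module.End Kq (TP r m)} {π π' : Fin m → ℤ}
    (hA : Stab A π) (hAB : A * B = B * A) (φ : (Fin m → Idx r) → (Fin m → Idx r))
    (hφ : ∀ g, φ (φ g) = g) (hπ : ∀ g, pat r ∘ φ g = π ↔ pat r ∘ g = π')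
    (hB : ∀ w ∈ patSpace r π, B w = fun g => w (φ g)) : Stab A π' := by
  intro v hv
  have hu : (fun g => v (φ g)) ∈ patSpace r π := by
    intro g hg
    refine hv _ fun h => hg ?_
    rwa [← hπ, hφ] at h
  have hv' : v = B (fun g => v (φ g)) := by
    rw [hB _ hu]
    funext g
    simp only [hφ]
  have hAv : A v = B (A (fun g => v (φ g))) := by
    conv_lhs => rw [hv']
    exact LinearMap.congr_fun hAB _
  rw [hAv, hB _ (hA _ hu)]
  intro g hg
  exact hA _ hu _ fun h => hg ((hπ g).1 h)

/-- The operator `Ψ(H_i)⁻¹ = Ψ(H_i) + (q - q⁻¹)` commutes with whatever `Ψ(H_i)` commutes with. -/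
lemma comm_add_smul {r m : ℕ} {A B : Module.End Kq (TP r m)} (h : A * B = B * A) (c : Kq) :
    A * (B + c • 1) = (B + c • 1) * A := by
  rw [mul_add, add_mul, h, mul_smul_comm, smul_mul_assoc, mul_one, one_mul]

lemma Rsw_apply {r m p : ℕ} (h : p + 1 < m) (w : TP r m) (g : Fin m → Idx r) :
    Rsw r m p w g = if g ⟨p, by omega⟩ = g ⟨p+1, h⟩ then qv⁻¹ * w g
        else w (g ∘ Equiv.swap ⟨p, by omega⟩ ⟨p+1, h⟩) +
          (if g ⟨p+1, h⟩ < g ⟨p, by omega⟩ then (qv⁻¹ - qv) * w g else 0) := by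
  rw [Rsw, dif_pos h]
  rfl

lemma R0op_apply {r m : ℕ} (h : 0 < m) (w : TP r m) (g : Fin m → Idx r) :
    R0op r m w g = w (Function.update g ⟨0, h⟩ (Fin.rev (g ⟨0, h⟩))) +
          (if g ⟨0, h⟩ < Fin.rev (g ⟨0, h⟩) then (qv⁻¹ - qv) * w g else 0) := by
  rw [R0op, dif_pos h]
  rfl

lemma comp_swap_eq_iff {m : ℕ} {α : Type*} (a b : Fin m) (x y : Fin m → α) :
    x ∘ Equiv.swap a b = y ↔ x = y ∘ Equiv.swap a b := by
  constructor
  · rintro rfl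
    funext k
    simp
  · rintro rfl
    funext k
    simp

lemma Stab.adjSwap {r m p : ℕ} (h : p + 1 < m) {A : Module.End Kq (TP r m)} {π : Fin m → ℤ}
    (hA : Stab A π) (hAB : A * Rsw r m p = Rsw r m p * A) :
    Stab A (π ∘ Equiv.swap ⟨p, by omega⟩ ⟨p+1, h⟩) := by
  have hp : p < m := by omega
  have hφ : ∀ g : Fin m → Idx r,
      (g ∘ Equiv.swap ⟨p, hp⟩ ⟨p+1, h⟩) ∘ Equiv.swap ⟨p, hp⟩ ⟨p+1, h⟩ = g := by
    intro g
    funext k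
    simp
  have hπ : ∀ g : Fin m → Idx r, pat r ∘ (g ∘ Equiv.swap ⟨p, hp⟩ ⟨p+1, h⟩) = π ↔
      pat r ∘ g = π ∘ Equiv.swap ⟨p, hp⟩ ⟨p+1, h⟩ := by
    intro g
    rw [← Function.comp_assoc, comp_swap_eq_iff]
  rcases lt_trichotomy (π ⟨p, hp⟩) (π ⟨p+1, h⟩) with hlt | heq | hgt
  · refine hA.transport hAB _ hφ hπ fun w hw => ?_
    funext g
    rw [Rsw_apply h]
    by_cases hg : pat r ∘ g = π
    · subst hg
      have := lt_of_pat_lt hlt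
      rw [if_neg this.ne, if_neg this.not_gt, add_zero]
    · rw [hw g hg]
      split_ifs with h1 h2
      · -- equal neighbouring entries mean that the swap fixes `g`
        have : g ∘ Equiv.swap ⟨p, hp⟩ ⟨p+1, h⟩ = g := by
          funext k
          rw [Function.comp_apply]
          rw [Equiv.swap_apply_def]
          split_ifs with h3 h4
          · rw [h3, h1]
          · rw [h4, h1]
          · rfl
        rw [this, hw g hg, mul_zero]
      · rw [mul_zero, add_zero]
      · rw [add_zero]
  · convert hA using 1
    funext k
    rw [Function.comp_apply, Equiv.swap_apply_def]
    split_ifs with h3 h4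
    · rw [h3, heq]
    · rw [h4, heq]
    · rfl
  · refine hA.transport (comm_add_smul hAB (qv - qv⁻¹)) _ hφ hπ fun w hw => ?_
    funext g
    rw [LinearMap.add_apply, Pi.add_apply, Rsw_apply h, LinearMap.smul_apply, Pi.smul_apply,
      Module.End.one_apply, smul_eq_mul]
    by_cases hg : pat r ∘ g = π
    · subst hg
      have := lt_of_pat_lt hgt
      rw [if_neg this.ne', if_pos this]
      ring
    · rw [hw g hg]
      split_ifs with h1 h2
      · have : g ∘ Equiv.swap ⟨p, hp⟩ ⟨p+1, h⟩ = g := by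
          funext k
          rw [Function.comp_apply, Equiv.swap_apply_def]
          split_ifs with h3 h4
          · rw [h3, h1]
          · rw [h4, h1]
          · rfl
        rw [this, hw g hg]
        ring
      · ring
      · ring

lemma Stab.flip_zero {r m : ℕ} (h : 0 < m) {A : Module.End Kq (TP r m)} {π : Fin m → ℤ}
    (hA : Stab A π) (hAB : A * R0op r m = R0op r m * A) :
    Stab A (Function.update π ⟨0, h⟩ (-π ⟨0, h⟩)) := by
  have hφ : ∀ g : Fin m → Idx r,
      Function.update (Function.update g ⟨0, h⟩ (Fin.rev (g ⟨0, h⟩))) ⟨0, h⟩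
        (Fin.rev (Function.update g ⟨0, h⟩ (Fin.rev (g ⟨0, h⟩)) ⟨0, h⟩)) = g := by
    intro g
    simp
  have hπ : ∀ g : Fin m → Idx r,
      pat r ∘ Function.update g ⟨0, h⟩ (Fin.rev (g ⟨0, h⟩)) = π ↔
      pat r ∘ g = Function.update π ⟨0, h⟩ (-π ⟨0, h⟩) := by
    intro g
    rw [Function.comp_update, pat_rev, Function.update_eq_iff, Function.eq_update_iff]
    refine and_congr ?_ Iff.rfl
    rw [Function.comp_apply, neg_eq_iff_eq_neg]
  rcases lt_trichotomy (π ⟨0, h⟩) 0 with hlt | heq | hgt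
  · refine hA.transport (comm_add_smul hAB (qv - qv⁻¹)) _ hφ hπ fun w hw => ?_
    funext g
    rw [LinearMap.add_apply, Pi.add_apply, R0op_apply h, LinearMap.smul_apply, Pi.smul_apply,
      Module.End.one_apply, smul_eq_mul]
    by_cases hg : pat r ∘ g = π
    · subst hg
      have : g ⟨0, h⟩ < Fin.rev (g ⟨0, h⟩) := lt_of_pat_lt (by
        rw [pat_rev]
        rw [Function.comp_apply] at hlt
        omega)
      rw [if_pos this]
      ring
    · rw [hw g hg]
      split_ifs <;> ring
  · convert hA using 1
    rw [heq, neg_zero, ← heq, Function.update_eq_self]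
  · refine hA.transport hAB _ hφ hπ fun w hw => ?_
    funext g
    rw [R0op_apply h]
    by_cases hg : pat r ∘ g = π
    · subst hg
      have : Fin.rev (g ⟨0, h⟩) < g ⟨0, h⟩ := lt_of_pat_lt (by
        rw [pat_rev]
        rw [Function.comp_apply] at hgt
        omega)
      rw [if_neg this.not_gt, add_zero]
    · rw [hw g hg]
      split_ifs <;> ring

/-! ### The action of the hyperoctahedral group -/

section Orbit

variable {r m : ℕ} {A : Module.End Kq (TP r m)}

lemma Stab.of_perm (hsw : ∀ p, p + 1 < m → A * Rsw r m p = Rsw r m p * A)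
    (σ : Equiv.Perm (Fin m)) {π : Fin m → ℤ} (hA : Stab A π) : Stab A (π ∘ σ) := by
  rcases m with _ | n
  · rwa [Subsingleton.elim (π ∘ σ) π]
  have hσ : σ ∈ Submonoid.closure
      (Set.range fun i : Fin n => Equiv.swap i.castSucc i.succ) := by
    rw [Equiv.Perm.mclosure_swap_castSucc_succ]
    trivial
  induction hσ using Submonoid.closure_induction generalizing π with
  | mem x hx =>
    obtain ⟨i, rfl⟩ := hx
    exact hA.adjSwap (Nat.succ_lt_succ i.2) (hsw i (Nat.succ_lt_succ i.2))
  | one => exact hA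
  | mul x y _ _ hx hy => exact hy (hx hA)

lemma Stab.flip (hsw : ∀ p, p + 1 < m → A * Rsw r m p = Rsw r m p * A)
    (h0 : A * R0op r m = R0op r m * A) (k : Fin m) {π : Fin m → ℤ} (hA : Stab A π) :
    Stab A (Function.update π k (-π k)) := by
  have h : 0 < m := k.pos
  have := ((hA.of_perm hsw (Equiv.swap ⟨0, h⟩ k)).flip_zero h h0).of_perm hsw
    (Equiv.swap ⟨0, h⟩ k)
  convert this using 1
  funext j
  by_cases hj : j = k
  · subst hj
    simp
  · have : Equiv.swap ⟨0, h⟩ k j ≠ ⟨0, h⟩ := by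
      rw [ne_eq, Equiv.swap_apply_eq_iff, Equiv.swap_apply_left]
      exact hj
    simp [hj, this]

lemma Stab.flip_finset (hsw : ∀ p, p + 1 < m → A * Rsw r m p = Rsw r m p * A)
    (h0 : A * R0op r m = R0op r m * A) {π : Fin m → ℤ} (hA : Stab A π) (J : Finset (Fin m)) :
    Stab A (fun k => if k ∈ J then -π k else π k) := by
  induction J using Finset.induction_on with
  | empty => simpa using hA
  | insert a J ha ih =>
    convert ih.flip hsw h0 a using 1
    funext k
    by_cases hk : k = a
    · subst hk
      simp [ha]
    · simp [hk]

/-- A pattern with entries in `{0, 1}` can be sorted into a standard one. -/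
lemma exists_sort (π : Fin m → ℤ) (hπ : ∀ k, π k = 0 ∨ π k = 1) :
    ∃ l ≤ m, ∃ σ : Equiv.Perm (Fin m), π = stdPat m l ∘ σ := by
  have hmono : Monotone (π ∘ Tuple.sort π) := Tuple.monotone_sort π
  -- `l` is the first position (or `m`) from which the sorted pattern is `1`
  have hex : ∃ l : ℕ, ∀ k : Fin m, l ≤ (k : ℕ) → (π ∘ Tuple.sort π) k = 1 :=
    ⟨m, fun k hk => absurd k.2 (by omega)⟩
  classical
  refine ⟨Nat.find hex, Nat.find_min' hex fun k hk => absurd k.2 (by omega),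
    (Tuple.sort π)⁻¹, ?_⟩
  have hstd : π ∘ Tuple.sort π = stdPat m (Nat.find hex) := by
    funext k
    rw [stdPat]
    split_ifs with hk
    · have hlt := Nat.find_min hex hk
      push Not at hlt
      obtain ⟨j, hkj, hj⟩ := hlt
      have h1 : (π ∘ Tuple.sort π) k ≤ (π ∘ Tuple.sort π) j := hmono hkj
      have h2 := hπ (Tuple.sort π j)
      have h3 := hπ (Tuple.sort π k)
      simp only [Function.comp_apply] at *
      omega
    · exact Nat.find_spec hex k (by omega)
  rw [← hstd]
  funext k
  simp

lemma stab_all (hsw : ∀ p, p + 1 < m → A * Rsw r m p = Rsw r m p * A)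
    (h0 : A * R0op r m = R0op r m * A) (hstd : ∀ l ≤ m, Stab A (stdPat m l))
    (π : Fin m → ℤ) (hπ : ∀ k, π k = -1 ∨ π k = 0 ∨ π k = 1) : Stab A π := by
  obtain ⟨l, hl, σ, hσ⟩ := exists_sort (fun k => |π k|) fun k => by
    rcases hπ k with h | h | h <;> simp [h]
  have habs : Stab A (fun k => |π k|) := hσ ▸ (hstd l hl).of_perm hsw σ
  convert habs.flip_finset hsw h0 (Finset.univ.filter fun k => π k < 0) using 1
  funext k
  rcases hπ k with h | h | h <;> simp [h]

end Orbit

/-! ### The projections `Ξ(x_e^{(l)})` -/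

lemma opPerm_one (r m l : ℕ) : opPerm r m (1 : Equiv.Perm (Fin l)) = 1 := by
  have h : lenPerm (1 : Equiv.Perm (Fin l)) = 0 := by
    rw [lenPerm, Finset.card_eq_zero, Finset.filter_eq_empty_iff]
    rintro p - ⟨h1, h2⟩
    exact absurd h1 h2.not_gt
  simp [opPerm, permWord, h, permWordAux]

/-- `A` stabilizes the image of a projection `P` with which it commutes. -/
lemma stab_std {r m l : ℕ} {A P : Module.End Kq (TP r m)} (hAP : A * P = P * A)
    (h1 : ∀ v ∈ Vsub r m l, P v = v) (h0 : ∀ f, ¬ goodF r m l f → P (Mf f) = 0) :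
    Stab A (stdPat m l) := by
  have hP : ∀ w, P w ∈ Vsub r m l := by
    intro w
    rw [eq_sum_Mf w, map_sum]
    refine Submodule.sum_mem _ fun f _ => ?_
    rw [map_smul]
    refine Submodule.smul_mem _ _ ?_
    by_cases hf : goodF r m l f
    · have : Mf f ∈ Vsub r m l := Submodule.subset_span ⟨f, hf, rfl⟩
      rwa [h1 _ this]
    · rw [h0 f hf]
      exact Submodule.zero_mem _
  intro v hv
  rw [← Vsub_eq] at hv ⊢
  have : A v = P (A v) := by
    conv_lhs => rw [← h1 v hv]
    exact LinearMap.congr_fun hAP v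
  rw [this]
  exact hP _

lemma stab_Vlevel {r m l : ℕ} {A : Module.End Kq (TP r m)}
    (hA : ∀ f : Fin m → Idx r, Stab A (pat r ∘ f)) :
    ∀ v ∈ Vlevel r m l, A v ∈ Vlevel r m l := by
  intro v hv
  rw [Vlevel] at hv
  induction hv using Submodule.span_induction with
  | mem x hx =>
    obtain ⟨f, hf, rfl⟩ := hx
    have hMf : Mf f ∈ patSpace r (pat r ∘ f) := by
      intro g hg
      have : g ≠ f := by rintro rfl; exact hg rfl
      simp [Mf, this]
    rw [Vlevel, mem_span_Mf]
    intro g hg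
    refine hA f _ hMf g fun h => hg ?_
    -- the number of inner positions depends on the pattern only
    rw [← hf]
    refine Nat.card_congr (Equiv.subtypeEquivRight fun k => ?_)
    have hk : pat r (g k) = pat r (f k) := congrFun h k
    rw [← pat_eq_zero_iff, hk, pat_eq_zero_iff]
  | zero => rw [map_zero]; exact Submodule.zero_mem _
  | add x y _ _ hx hy => rw [map_add]; exact Submodule.add_mem _ hx hy
  | smul c x _ hx => rw [map_smul]; exact Submodule.smul_mem _ _ hx

/-- **Step (a) in the proof of Theorem 3.5.** If `A ∈ End_K(V̄^⊗m)` commutes with `Ξ(h)`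
for every `h ∈ 𝓗_m`, then `A` stabilizes every subspace `V̄_{I,J}`; in particular `A`
stabilizes `V^{⊗l} ⊗ η_{r+3/2}^{⊗(m-l)}` and each `V̄_l` for `0 ≤ l ≤ m`. -/
theorem commutant_stabilizes_VIJ (r m : ℕ) (hr : 1 ≤ r) (hm : 2 ≤ m)
    (Xi : DuplexH m →ₐ[Kq] (Module.End Kq (TP r m))ᵐᵒᵖ)
    (hXiT : ∀ i : Fin m, (Xi (Tg m i)).unop = RopN r m (i : ℕ))
    (hXix : ∀ (l : Fin (m+1)) (σ : Equiv.Perm (Fin (l : ℕ))),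
      ∀ v ∈ Vsub r m (l : ℕ), (Xi (Xg m l σ)).unop v = opPerm r m σ v)
    (hXix0 : ∀ (l : Fin (m+1)) (σ : Equiv.Perm (Fin (l : ℕ))) (f : Fin m → Idx r),
      ¬ goodF r m (l : ℕ) f → (Xi (Xg m l σ)).unop (Mf f) = 0) :
    ∀ A : Module.End Kq (TP r m),
      (∀ h : DuplexH m, A * (Xi h).unop = (Xi h).unop * A) →
      (∀ I J : Finset (Fin m), Disjoint I J →
        ∀ v ∈ VIJ r m I J, A v ∈ VIJ r m I J) ∧
      (∀ l : ℕ, l ≤ m →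
        (∀ v ∈ Vsub r m l, A v ∈ Vsub r m l) ∧
        (∀ v ∈ Vlevel r m l, A v ∈ Vlevel r m l)) := by
  intro A hA
  have hR : ∀ i : ℕ, i < m → A * RopN r m i = RopN r m i * A := fun i hi => by
    rw [← hXiT ⟨i, hi⟩]
    exact hA _
  have h0 : A * R0op r m = R0op r m * A := by simpa [RopN] using hR 0 (by omega)
  have hsw : ∀ p, p + 1 < m → A * Rsw r m p = Rsw r m p * A := fun p hp => by
    simpa [RopN] using hR (p+1) hp
  have hstd : ∀ l ≤ m, Stab A (stdPat m l) := fun l hl => by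
    refine stab_std (hA (Xg m ⟨l, by omega⟩ 1)) (fun v hv => ?_)
      (fun f hf => hXix0 ⟨l, by omega⟩ 1 f hf)
    rw [hXix ⟨l, by omega⟩ 1 v hv, opPerm_one, Module.End.one_apply]
  have hall := stab_all hsw h0 hstd
  refine ⟨fun I J hIJ => ?_, fun l hl => ⟨?_, stab_Vlevel fun f => hall _ fun k => ?_⟩⟩
  · rw [VIJ_eq r m I J hIJ]
    refine hall _ fun k => ?_
    split_ifs <;> simp
  · rw [Vsub_eq]
    exact hstd l hl
  · rw [Function.comp_apply, pat]
    split_ifs <;> simp
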